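/- (Deterministic form of the consistency theorem.) For k = 0,1, let μ̂ₙᵏ ∈ ℝ^p and symmetric positive definite p×p matrices Σ̂ₙᵏ satisfy μ̂ₙᵏ → μ_k and Σ̂ₙᵏ → Σ_k as n → ∞, and let Êₙ be the classification error function defined from (μ̂ₙ⁰, μ̂ₙ¹, Σ̂ₙ⁰, Σ̂ₙ¹) by the same formula as E. Assume E has a unique minimizing direction: there is a unit vector α₀ such that E(α₀) ≤ E(α) for all unit α, with equality only for α = ±α₀. For each n let α̂ₙ be a unit vector minimizing Êₙ over the unit sphere. Then min(‖α̂ₙ − α₀‖, ‖α̂ₙ + α₀‖) → 0 as n → ∞. -/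

import Mathlib

open MeasureTheory ProbabilityTheory Matrix Filter Set

noncomputable def Phi (t : ℝ) : ℝ := ((gaussianReal 0 1) (Set.Iic t)).toReal
noncomputable def calE (r g : ℝ) : ℝ :=
  if g = 1 then Phi (-(|r| / 2))
  else
    1/2
      + (1/2) * Phi ((r - g * Real.sqrt (r^2 + (g^2 - 1) * Real.log (g^2))) / (g^2 - 1))
      - (1/2) * Phi ((r + g * Real.sqrt (r^2 + (g^2 - 1) * Real.log (g^2))) / (g^2 - 1))
      + (1/2) * Phi ((r * g + Real.sqrt (r^2 + (g^2 - 1) * Real.log (g^2))) / (g^2 - 1))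
      - (1/2) * Phi ((r * g - Real.sqrt (r^2 + (g^2 - 1) * Real.log (g^2))) / (g^2 - 1))
noncomputable def Evec {p : ℕ} (μ0 μ1 : Fin p → ℝ) (S0 S1 : Matrix (Fin p) (Fin p) ℝ)
    (α : Fin p → ℝ) : ℝ :=
  calE ((dotProduct α μ0 - dotProduct α μ1) / Real.sqrt (dotProduct α (S1.mulVec α)))
    (Real.sqrt (dotProduct α (S0.mulVec α)) / Real.sqrt (dotProduct α (S1.mulVec α)))
noncomputable def frobNorm {p : ℕ} (M : Matrix (Fin p) (Fin p) ℝ) : ℝ :=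
  Real.sqrt (∑ i, ∑ j, (M i j)^2)

/-!
A limit point of minimizers of `Êₙ` on the compact sphere minimizes `E` as soon as `Êₙ` converges
continuously to `E`, i.e. `Êₙ(αₙ) → E(α)` whenever `αₙ → α`. Everything therefore rests on the joint
continuity of `calE` at points with `g > 0`, which is delicate only on the line `g = 1`, where the
denominators vanish. There, write `calE = 1/2 + (Φ(a) - Φ(d))/2 + (Φ(c) - Φ(b))/2` with
`a, d = (r - g√Δ)/(g² - 1), (rg - √Δ)/(g² - 1)` and `b, c` the same with `+√Δ`. Since `Φ` is
Lipschitz, the identity `c - b = (r - √Δ)/(1 + g)` makes the last bracket vanish in the limit for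
`r ≥ 0`, even though `b` and `c` diverge when `r > 0`. The points `a` and `d` converge to `-r/2` and
`r/2` after rationalization when `r > 0`, while `a - d = -(r + √Δ)/(1 + g)` tends to `0` when
`r = 0`. Evenness in `r` covers `r < 0`.
-/

open scoped Topology

lemma tendsto_sub_of_uniformContinuous {G H ι : Type*} [AddGroup G] [UniformSpace G]
    [IsUniformAddGroup G] [AddGroup H] [UniformSpace H] [IsUniformAddGroup H]
    {f : G → H} (hf : UniformContinuous f) {l : Filter ι} {u v : ι → G}
    (h : Tendsto (fun i => u i - v i) l (𝓝 0)) :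
    Tendsto (fun i => f (u i) - f (v i)) l (𝓝 0) := by
  have huv : Tendsto (fun i => (v i, u i)) l (uniformity G) := by
    rwa [uniformity_eq_comap_nhds_zero, tendsto_comap_iff]
  have hfuv := Tendsto.comp hf huv
  rwa [uniformity_eq_comap_nhds_zero, tendsto_comap_iff] at hfuv

section CumulativeDistribution

variable {μ : Measure ℝ}

lemma lipschitzWith_measureReal_Iic [IsFiniteMeasure μ] {c : NNReal} (h : μ ≤ c • volume) :
    LipschitzWith c (fun t => μ.real (Iic t)) := by
  refine LipschitzWith.of_le_add_mul c fun x y => ?_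
  have hIoc : μ.real (Ioc y x) ≤ c * dist x y := by
    refine ENNReal.toReal_le_of_le_ofReal (by positivity) ((h _).trans ?_)
    rw [Measure.smul_apply, Real.volume_Ioc, ENNReal.smul_def, smul_eq_mul,
      ENNReal.ofReal_mul c.coe_nonneg, ENNReal.ofReal_coe_nnreal, Real.dist_eq]
    gcongr
    exact le_abs_self _
  calc μ.real (Iic x) ≤ μ.real (Iic y ∪ Ioc y x) := measureReal_mono fun t ht => by grind
    _ ≤ μ.real (Iic y) + μ.real (Ioc y x) := measureReal_union_le _ _
    _ ≤ μ.real (Iic y) + c * dist x y := by gcongr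

lemma measureReal_Iic_neg [IsProbabilityMeasure μ] [μ.IsNegInvariant] [NullSingletonClass μ]
    (x : ℝ) : μ.real (Iic (-x)) = 1 - μ.real (Iic x) := by
  calc μ.real (Iic (-x)) = μ.real (Ici x) := by
        rw [← neg_Ici, measureReal_def, Measure.measure_neg, measureReal_def]
    _ = μ.real (Iic x)ᶜ := by rw [compl_Iic, measureReal_congr Ioi_ae_eq_Ici]
    _ = 1 - μ.real (Iic x) := probReal_compl_eq_one_sub measurableSet_Iic

lemma gaussianReal_le_smul_volume (m : ℝ) {v : NNReal} (hv : v ≠ 0) :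
    gaussianReal m v ≤ (√(2 * Real.pi * v))⁻¹.toNNReal • volume := by
  rw [gaussianReal_of_var_ne_zero m hv, ENNReal.smul_def, ← withDensity_const]
  refine withDensity_mono (ae_of_all _ fun x => ENNReal.ofReal_le_ofReal ?_)
  refine mul_le_of_le_one_right (by positivity) (Real.exp_le_one_iff.mpr ?_)
  exact div_nonpos_of_nonpos_of_nonneg (neg_nonpos.mpr (sq_nonneg _)) (by positivity)

instance isNegInvariant_gaussianReal_zero (v : NNReal) : (gaussianReal 0 v).IsNegInvariant :=
  ⟨by rw [Measure.neg, gaussianReal_map_neg, neg_zero]⟩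

end CumulativeDistribution

lemma lipschitzWith_Phi : LipschitzWith (√(2 * Real.pi))⁻¹.toNNReal Phi :=
  lipschitzWith_measureReal_Iic (by simpa using gaussianReal_le_smul_volume 0 one_ne_zero)

@[fun_prop]
lemma continuous_Phi : Continuous Phi :=
  lipschitzWith_Phi.continuous

lemma Phi_neg (x : ℝ) : Phi (-x) = 1 - Phi x :=
  have := nullSingletonClass_gaussianReal (μ := 0) one_ne_zero
  measureReal_Iic_neg x

/-- The square root `√Δ(r, g)` of the discriminant `Δ(r, g) = r² + (g² - 1) log g²` occurring
in `calE`. -/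
noncomputable def sqrtDiscr (r g : ℝ) : ℝ :=
  √(r ^ 2 + (g ^ 2 - 1) * Real.log (g ^ 2))

lemma sub_one_mul_log_nonneg {x : ℝ} (hx : 0 ≤ x) : 0 ≤ (x - 1) * Real.log x := by
  rcases le_total 1 x with h | h
  · exact mul_nonneg (sub_nonneg.mpr h) (Real.log_nonneg h)
  · exact mul_nonneg_of_nonpos_of_nonpos (sub_nonpos.mpr h) (Real.log_nonpos hx h)

lemma sqrtDiscr_nonneg (r g : ℝ) : 0 ≤ sqrtDiscr r g :=
  Real.sqrt_nonneg _

lemma sq_sqrtDiscr (r g : ℝ) :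
    sqrtDiscr r g ^ 2 = r ^ 2 + (g ^ 2 - 1) * Real.log (g ^ 2) :=
  Real.sq_sqrt (add_nonneg (sq_nonneg r) (sub_one_mul_log_nonneg (sq_nonneg g)))

lemma sqrtDiscr_neg (r g : ℝ) : sqrtDiscr (-r) g = sqrtDiscr r g := by
  rw [sqrtDiscr, neg_sq, sqrtDiscr]

lemma sqrtDiscr_one (r : ℝ) : sqrtDiscr r 1 = |r| := by
  simp [sqrtDiscr, Real.sqrt_sq_eq_abs]

lemma continuousAt_sqrtDiscr {r g : ℝ} (hg : g ≠ 0) :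
    ContinuousAt (fun q : ℝ × ℝ => sqrtDiscr q.1 q.2) (r, g) := by
  have hlog : ContinuousAt (fun q : ℝ × ℝ => Real.log (q.2 ^ 2)) (r, g) :=
    ContinuousAt.log (by fun_prop) (pow_ne_zero 2 hg)
  unfold sqrtDiscr
  fun_prop

lemma calE_one (r : ℝ) : calE r 1 = Phi (-(|r| / 2)) :=
  if_pos rfl

/-- The terms are regrouped to pair the two boundary points that stay bounded as `g → 1` with
`0 < r`, and the two that diverge. -/
lemma calE_of_ne_one (r : ℝ) {g : ℝ} (hg : g ≠ 1) :
    calE r g = 1 / 2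
      + 1 / 2 * (Phi ((r - g * sqrtDiscr r g) / (g ^ 2 - 1))
        - Phi ((r * g - sqrtDiscr r g) / (g ^ 2 - 1)))
      + 1 / 2 * (Phi ((r * g + sqrtDiscr r g) / (g ^ 2 - 1))
        - Phi ((r + g * sqrtDiscr r g) / (g ^ 2 - 1))) := by
  rw [calE, if_neg hg]
  simp only [sqrtDiscr]
  ring

lemma calE_neg (r g : ℝ) : calE (-r) g = calE r g := by
  rcases eq_or_ne g 1 with rfl | hg
  · rw [calE_one, calE_one, abs_neg]
  · rw [calE_of_ne_one _ hg, calE_of_ne_one _ hg, sqrtDiscr_neg]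
    set D := sqrtDiscr r g
    rw [show -r - g * D = -(r + g * D) by ring, show -r + g * D = -(r - g * D) by ring,
      show -r * g + D = -(r * g - D) by ring, show -r * g - D = -(r * g + D) by ring]
    simp only [neg_div, Phi_neg]
    ring

lemma calE_abs (r g : ℝ) : calE |r| g = calE r g := by
  rcases abs_choice r with h | h <;> rw [h]
  exact calE_neg r g

lemma sq_sub_one_ne_zero {g : ℝ} (hg : 0 < g) (hg1 : g ≠ 1) : g ^ 2 - 1 ≠ 0 :=
  sub_ne_zero.mpr fun h => hg1 ((pow_eq_one_iff_of_nonneg hg.le two_ne_zero).mp h)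

lemma continuousAt_calE_of_ne_one (r : ℝ) {g : ℝ} (hg : 0 < g) (hg1 : g ≠ 1) :
    ContinuousAt (fun q : ℝ × ℝ => calE q.1 q.2) (r, g) := by
  have hden := sq_sub_one_ne_zero hg hg1
  have hD := continuousAt_sqrtDiscr (r := r) hg.ne'
  have hne : ∀ᶠ q : ℝ × ℝ in 𝓝 (r, g), q.2 ≠ 1 := continuousAt_snd.eventually_ne hg1
  refine ContinuousAt.congr_of_eventuallyEq ?_ (hne.mono fun q hq => calE_of_ne_one q.1 hq)
  fun_prop (disch := assumption)

lemma div_sub_div_sq_sub_one {K : Type*} [Field K] (r D : K) {g : K} (hg : g ^ 2 - 1 ≠ 0) :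
    (r * g + D) / (g ^ 2 - 1) - (r + g * D) / (g ^ 2 - 1) = (r - D) / (1 + g) := by
  have hg' : 1 + g ≠ 0 := fun h => hg (by linear_combination (g - 1) * h)
  rw [← sub_div, div_eq_div_iff hg hg']
  ring

lemma sub_mul_sqrtDiscr_div {r g : ℝ} (hg : g ^ 2 - 1 ≠ 0) (h : r + g * sqrtDiscr r g ≠ 0) :
    (r - g * sqrtDiscr r g) / (g ^ 2 - 1)
      = (-r ^ 2 - g ^ 2 * Real.log (g ^ 2)) / (r + g * sqrtDiscr r g) := by
  rw [div_eq_div_iff hg h]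
  linear_combination (-g ^ 2) * sq_sqrtDiscr r g

lemma mul_sub_sqrtDiscr_div {r g : ℝ} (hg : g ^ 2 - 1 ≠ 0) (h : r * g + sqrtDiscr r g ≠ 0) :
    (r * g - sqrtDiscr r g) / (g ^ 2 - 1)
      = (r ^ 2 - Real.log (g ^ 2)) / (r * g + sqrtDiscr r g) := by
  rw [div_eq_div_iff hg h]
  linear_combination -sq_sqrtDiscr r g

lemma eventually_snd_pos_and_ne_one (r : ℝ) :
    ∀ᶠ q : ℝ × ℝ in 𝓝[{q | q.2 ≠ 1}] (r, 1), 0 < q.2 ∧ q.2 ≠ 1 :=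
  (eventually_nhdsWithin_of_eventually_nhds
    (continuousAt_snd.eventually (lt_mem_nhds one_pos))).and self_mem_nhdsWithin

lemma tendsto_Phi_sub_Phi_far {r : ℝ} (hr : 0 ≤ r) :
    Tendsto (fun q : ℝ × ℝ => Phi ((q.1 * q.2 + sqrtDiscr q.1 q.2) / (q.2 ^ 2 - 1))
      - Phi ((q.1 + q.2 * sqrtDiscr q.1 q.2) / (q.2 ^ 2 - 1))) (𝓝[{q | q.2 ≠ 1}] (r, 1)) (𝓝 0) := by
  have hD := continuousAt_sqrtDiscr (r := r) one_ne_zero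
  have hlim : ContinuousAt (fun q : ℝ × ℝ => (q.1 - sqrtDiscr q.1 q.2) / (1 + q.2)) (r, 1) := by
    fun_prop (disch := norm_num)
  have hzero : (r - sqrtDiscr r 1) / (1 + 1) = 0 := by simp [sqrtDiscr_one, abs_of_nonneg hr]
  refine tendsto_sub_of_uniformContinuous lipschitzWith_Phi.uniformContinuous ?_
  refine Tendsto.congr' ?_ (hzero ▸ hlim.tendsto.mono_left nhdsWithin_le_nhds)
  filter_upwards [eventually_snd_pos_and_ne_one r] with q ⟨hg, hg1⟩
  exact (div_sub_div_sq_sub_one q.1 _ (sq_sub_one_ne_zero hg hg1)).symm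

lemma tendsto_Phi_sub_Phi_near_of_pos {r : ℝ} (hr : 0 < r) :
    Tendsto (fun q : ℝ × ℝ => Phi ((q.1 - q.2 * sqrtDiscr q.1 q.2) / (q.2 ^ 2 - 1))
      - Phi ((q.1 * q.2 - sqrtDiscr q.1 q.2) / (q.2 ^ 2 - 1)))
      (𝓝[{q | q.2 ≠ 1}] (r, 1)) (𝓝 (Phi (-(r / 2)) - Phi (r / 2))) := by
  have hD := continuousAt_sqrtDiscr (r := r) one_ne_zero
  have hD1 : sqrtDiscr r 1 = r := by rw [sqrtDiscr_one, abs_of_pos hr]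
  have hlog : ContinuousAt (fun q : ℝ × ℝ => Real.log (q.2 ^ 2)) (r, 1) :=
    ContinuousAt.log (by fun_prop) (by norm_num)
  have ha : r + 1 * sqrtDiscr r 1 ≠ 0 := by rw [hD1]; positivity
  have hd : r * 1 + sqrtDiscr r 1 ≠ 0 := by rw [hD1]; positivity
  have hlim : ContinuousAt (fun q : ℝ × ℝ =>
      Phi ((-q.1 ^ 2 - q.2 ^ 2 * Real.log (q.2 ^ 2)) / (q.1 + q.2 * sqrtDiscr q.1 q.2))
        - Phi ((q.1 ^ 2 - Real.log (q.2 ^ 2)) / (q.1 * q.2 + sqrtDiscr q.1 q.2))) (r, 1) := by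
    fun_prop (disch := assumption)
  have ha_lim : (-r ^ 2 - 1 ^ 2 * Real.log (1 ^ 2)) / (r + 1 * sqrtDiscr r 1) = -(r / 2) := by
    simp only [hD1, one_pow, Real.log_one]
    field
  have hd_lim : (r ^ 2 - Real.log (1 ^ 2)) / (r * 1 + sqrtDiscr r 1) = r / 2 := by
    simp only [hD1, one_pow, Real.log_one]
    field
  rw [← ha_lim, ← hd_lim]
  refine Tendsto.congr' ?_ (hlim.tendsto.mono_left nhdsWithin_le_nhds)
  have hr_near : ∀ᶠ q : ℝ × ℝ in 𝓝[{q | q.2 ≠ 1}] (r, 1), 0 < q.1 :=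
    eventually_nhdsWithin_of_eventually_nhds (continuousAt_fst.eventually (lt_mem_nhds hr))
  filter_upwards [eventually_snd_pos_and_ne_one r, hr_near] with q ⟨hg, hg1⟩ hq
  have hden := sq_sub_one_ne_zero hg hg1
  have hsqrt := sqrtDiscr_nonneg q.1 q.2
  rw [sub_mul_sqrtDiscr_div hden (by positivity), mul_sub_sqrtDiscr_div hden (by positivity)]

lemma tendsto_Phi_sub_Phi_near_zero :
    Tendsto (fun q : ℝ × ℝ => Phi ((q.1 - q.2 * sqrtDiscr q.1 q.2) / (q.2 ^ 2 - 1))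
      - Phi ((q.1 * q.2 - sqrtDiscr q.1 q.2) / (q.2 ^ 2 - 1)))
      (𝓝[{q | q.2 ≠ 1}] (0, 1)) (𝓝 0) := by
  have hD := continuousAt_sqrtDiscr (r := 0) one_ne_zero
  have hlim : ContinuousAt (fun q : ℝ × ℝ => -((q.1 + sqrtDiscr q.1 q.2) / (1 + q.2)))
      (0, 1) := by fun_prop (disch := norm_num)
  have hzero : -((0 + sqrtDiscr 0 1) / (1 + 1)) = 0 := by simp [sqrtDiscr_one]
  refine tendsto_sub_of_uniformContinuous lipschitzWith_Phi.uniformContinuous ?_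
  refine Tendsto.congr' ?_ (hzero ▸ hlim.tendsto.mono_left nhdsWithin_le_nhds)
  filter_upwards [eventually_snd_pos_and_ne_one 0] with q ⟨hg, hg1⟩
  have hdiff := div_sub_div_sq_sub_one q.1 (-sqrtDiscr q.1 q.2) (sq_sub_one_ne_zero hg hg1)
  simp only [mul_neg, ← sub_eq_add_neg, sub_neg_eq_add] at hdiff
  rw [← hdiff, neg_sub]

lemma tendsto_Phi_sub_Phi_near {r : ℝ} (hr : 0 ≤ r) :
    Tendsto (fun q : ℝ × ℝ => Phi ((q.1 - q.2 * sqrtDiscr q.1 q.2) / (q.2 ^ 2 - 1))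
      - Phi ((q.1 * q.2 - sqrtDiscr q.1 q.2) / (q.2 ^ 2 - 1)))
      (𝓝[{q | q.2 ≠ 1}] (r, 1)) (𝓝 (Phi (-(r / 2)) - Phi (r / 2))) := by
  rcases hr.eq_or_lt with rfl | hr
  · simpa only [zero_div, neg_zero, sub_self] using tendsto_Phi_sub_Phi_near_zero
  · exact tendsto_Phi_sub_Phi_near_of_pos hr

lemma continuousAt_calE_one_of_nonneg {r : ℝ} (hr : 0 ≤ r) :
    ContinuousAt (fun q : ℝ × ℝ => calE q.1 q.2) (r, 1) := by
  have hone : ContinuousWithinAt (fun q : ℝ × ℝ => calE q.1 q.2) {q | q.2 = 1} (r, 1) := by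
    have hcont : Continuous fun q : ℝ × ℝ => Phi (-(|q.1| / 2)) := by fun_prop
    exact hcont.continuousWithinAt.congr (fun q hq => hq ▸ calE_one q.1) (calE_one r)
  have hne : ContinuousWithinAt (fun q : ℝ × ℝ => calE q.1 q.2) {q | q.2 ≠ 1} (r, 1) := by
    have hvalue : calE r 1 = 1 / 2 + 1 / 2 * (Phi (-(r / 2)) - Phi (r / 2)) + 1 / 2 * 0 := by
      rw [calE_one, abs_of_nonneg hr, Phi_neg]
      ring
    rw [ContinuousWithinAt, hvalue]
    refine Tendsto.congr' ?_ (((tendsto_Phi_sub_Phi_near hr).const_mul _).const_add _ |>.add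
      ((tendsto_Phi_sub_Phi_far hr).const_mul _))
    filter_upwards [self_mem_nhdsWithin] with q hq using (calE_of_ne_one q.1 hq).symm
  rw [← continuousWithinAt_univ, ← union_compl_self {q : ℝ × ℝ | q.2 = 1}]
  exact hone.union hne

lemma continuousAt_calE (r : ℝ) {g : ℝ} (hg : 0 < g) :
    ContinuousAt (fun q : ℝ × ℝ => calE q.1 q.2) (r, g) := by
  rcases eq_or_ne g 1 with rfl | hg1
  · have habs : ContinuousAt (fun q : ℝ × ℝ => (|q.1|, q.2)) (r, 1) := by fun_prop
    simpa only [Function.comp_def, calE_abs] using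
      ContinuousAt.comp (f := fun q : ℝ × ℝ => (|q.1|, q.2))
        (continuousAt_calE_one_of_nonneg (abs_nonneg r)) habs
  · exact continuousAt_calE_of_ne_one r hg hg1

section Evec

variable {p : ℕ}

lemma tendsto_Evec {ι : Type*} {l : Filter ι}
    {m0 m1 a : ι → Fin p → ℝ} {T0 T1 : ι → Matrix (Fin p) (Fin p) ℝ}
    {μ0 μ1 α : Fin p → ℝ} {S0 S1 : Matrix (Fin p) (Fin p) ℝ}
    (hm0 : Tendsto m0 l (𝓝 μ0)) (hm1 : Tendsto m1 l (𝓝 μ1))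
    (hT0 : Tendsto T0 l (𝓝 S0)) (hT1 : Tendsto T1 l (𝓝 S1)) (ha : Tendsto a l (𝓝 α))
    (h0 : 0 < α ⬝ᵥ S0 *ᵥ α) (h1 : 0 < α ⬝ᵥ S1 *ᵥ α) :
    Tendsto (fun i => Evec (m0 i) (m1 i) (T0 i) (T1 i) (a i)) l (𝓝 (Evec μ0 μ1 S0 S1 α)) := by
  have hdot {u v : ι → Fin p → ℝ} {x y : Fin p → ℝ} (hu : Tendsto u l (𝓝 x))
      (hv : Tendsto v l (𝓝 y)) : Tendsto (fun i => u i ⬝ᵥ v i) l (𝓝 (x ⬝ᵥ y)) :=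
    ((continuous_fst.dotProduct continuous_snd).tendsto (x, y)).comp (hu.prodMk_nhds hv)
  have hmulVec {T : ι → Matrix (Fin p) (Fin p) ℝ} {S : Matrix (Fin p) (Fin p) ℝ}
      (hT : Tendsto T l (𝓝 S)) : Tendsto (fun i => T i *ᵥ a i) l (𝓝 (S *ᵥ α)) :=
    ((continuous_fst.matrix_mulVec continuous_snd).tendsto (S, α)).comp (hT.prodMk_nhds ha)
  have hσ0 := (hdot ha (hmulVec hT0)).sqrt
  have hσ1 := (hdot ha (hmulVec hT1)).sqrt
  have hσ1_pos : 0 < √(α ⬝ᵥ S1 *ᵥ α) := Real.sqrt_pos.mpr h1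
  have hr := ((hdot ha hm0).sub (hdot ha hm1)).div hσ1 hσ1_pos.ne'
  have hg := hσ0.div hσ1 hσ1_pos.ne'
  exact (continuousAt_calE _ (div_pos (Real.sqrt_pos.mpr h0) hσ1_pos)).tendsto.comp
    (hr.prodMk_nhds hg)

lemma abs_apply_le_frobNorm (M : Matrix (Fin p) (Fin p) ℝ) (i j : Fin p) :
    |M i j| ≤ frobNorm M := by
  refine Real.abs_le_sqrt ?_
  calc M i j ^ 2 ≤ ∑ j', M i j' ^ 2 :=
        Finset.single_le_sum (f := fun j' => M i j' ^ 2)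
          (fun j' _ => sq_nonneg _) (Finset.mem_univ j)
    _ ≤ ∑ i', ∑ j', M i' j' ^ 2 :=
        Finset.single_le_sum (f := fun i' => ∑ j', M i' j' ^ 2)
          (fun i' _ => Finset.sum_nonneg fun j' _ => sq_nonneg _) (Finset.mem_univ i)

lemma tendsto_of_tendsto_frobNorm_sub {ι : Type*} {l : Filter ι}
    {T : ι → Matrix (Fin p) (Fin p) ℝ} {S : Matrix (Fin p) (Fin p) ℝ}
    (h : Tendsto (fun i => frobNorm (T i - S)) l (𝓝 0)) : Tendsto T l (𝓝 S) := by
  refine tendsto_pi_nhds.mpr fun i => tendsto_pi_nhds.mpr fun j => ?_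
  exact tendsto_iff_dist_tendsto_zero.mpr <|
    squeeze_zero (fun _ => dist_nonneg) (fun n => abs_apply_le_frobNorm (T n - S) i j) h

end Evec

/-- `hF` is continuous convergence of `F` to `f` on `K`: `F i (y i) → f y` whenever `y i → y`. -/
lemma tendsto_nhdsSet_argmin {ι X R : Type*} [TopologicalSpace X] [TopologicalSpace R]
    [Preorder R] [OrderClosedTopology R] {K : Set X} (hK : IsCompact K) {l : Filter ι}
    {F : ι → X → R} {f : X → R} {x : ι → X}
    (hF : ∀ y ∈ K, Tendsto (fun q : ι × X => F q.1 q.2) (l ×ˢ 𝓝 y) (𝓝 (f y)))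
    (hxK : ∀ᶠ i in l, x i ∈ K) (hx : ∀ᶠ i in l, IsMinOn (F i) K (x i)) :
    Tendsto x l (𝓝ˢ {y ∈ K | IsMinOn f K y}) := by
  refine (tendsto_iff_ultrafilter _ _ _).mpr fun u hu => ?_
  obtain ⟨a, haK, ha⟩ := hK.ultrafilter_le_nhds' (u.map x) (hu hxK)
  refine tendsto_nhdsSet_of_tendsto_nhds ⟨haK, fun y hy => ?_⟩ ha
  have hFx : Tendsto (fun i => F i (x i)) u (𝓝 (f a)) :=
    (hF a haK).comp (Tendsto.prodMk hu ha)
  have hFy : Tendsto (fun i => F i y) u (𝓝 (f y)) :=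
    (hF y hy).comp (Tendsto.prodMk hu tendsto_const_nhds)
  exact le_of_tendsto_of_tendsto hFx hFy ((hx.filter_mono hu).mono fun i hi => hi hy)

lemma tendsto_min_norm_sub_norm_add {E : Type*} [SeminormedAddCommGroup E] (a : E) :
    Tendsto (fun x => min ‖x - a‖ ‖x + a‖) (𝓝ˢ {a, -a}) (𝓝 0) := by
  have hcont : Continuous fun x => min ‖x - a‖ ‖x + a‖ := by fun_prop
  rw [nhdsSet_insert, nhdsSet_singleton, tendsto_sup]
  exact ⟨hcont.tendsto' _ _ (by simp), hcont.tendsto' _ _ (by simp)⟩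

theorem Evec_argmin_consistency_general {ι : Type*} {l : Filter ι} {p : ℕ}
    {μ0 μ1 : EuclideanSpace ℝ (Fin p)} {S0 S1 : Matrix (Fin p) (Fin p) ℝ}
    (h0 : S0.PosDef) (h1 : S1.PosDef)
    {μh0 μh1 : ι → EuclideanSpace ℝ (Fin p)} {Sh0 Sh1 : ι → Matrix (Fin p) (Fin p) ℝ}
    (hμ0 : Tendsto μh0 l (𝓝 μ0)) (hμ1 : Tendsto μh1 l (𝓝 μ1))
    (hS0 : Tendsto Sh0 l (𝓝 S0)) (hS1 : Tendsto Sh1 l (𝓝 S1))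
    {αh : ι → EuclideanSpace ℝ (Fin p)} (hαh : ∀ i, ‖αh i‖ = 1)
    (hαhmin : ∀ i, ∀ α : EuclideanSpace ℝ (Fin p), ‖α‖ = 1 →
      Evec (μh0 i) (μh1 i) (Sh0 i) (Sh1 i) (αh i) ≤ Evec (μh0 i) (μh1 i) (Sh0 i) (Sh1 i) α) :
    Tendsto αh l (𝓝ˢ {α | ‖α‖ = 1 ∧ ∀ β : EuclideanSpace ℝ (Fin p), ‖β‖ = 1 →
      Evec μ0 μ1 S0 S1 α ≤ Evec μ0 μ1 S0 S1 β}) := by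
  have hsphere : IsCompact {α : EuclideanSpace ℝ (Fin p) | ‖α‖ = 1} := by
    simpa [Metric.sphere] using isCompact_sphere (0 : EuclideanSpace ℝ (Fin p)) 1
  refine tendsto_nhdsSet_argmin (F := fun i α => Evec (μh0 i) (μh1 i) (Sh0 i) (Sh1 i) α.ofLp)
    (f := fun α => Evec μ0 μ1 S0 S1 α.ofLp) hsphere (fun α hα => ?_) (Eventually.of_forall hαh)
    (Eventually.of_forall hαhmin)
  have hofLp := PiLp.continuous_ofLp 2 fun _ : Fin p => ℝ
  have hα_ne : α.ofLp ≠ 0 := by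
    rw [Ne, WithLp.ofLp_eq_zero, ← norm_eq_zero, hα]
    exact one_ne_zero
  have hpos {S : Matrix (Fin p) (Fin p) ℝ} (hS : S.PosDef) : 0 < α.ofLp ⬝ᵥ S *ᵥ α.ofLp := by
    simpa using hS.dotProduct_mulVec_pos hα_ne
  exact tendsto_Evec ((hofLp.tendsto μ0).comp (hμ0.comp tendsto_fst))
    ((hofLp.tendsto μ1).comp (hμ1.comp tendsto_fst)) (hS0.comp tendsto_fst)
    (hS1.comp tendsto_fst) ((hofLp.tendsto α).comp tendsto_snd) (hpos h0) (hpos h1)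

/-- Deterministic consistency: if the estimated parameters converge, E has a unique
minimizing direction ±α₀ on the unit sphere, and α̂ₙ minimizes Êₙ over the unit
sphere, then min(‖α̂ₙ − α₀‖, ‖α̂ₙ + α₀‖) → 0. -/
theorem Evec_argmin_consistency {p : ℕ} (hp : 1 ≤ p)
    (μ0 μ1 : EuclideanSpace ℝ (Fin p)) (S0 S1 : Matrix (Fin p) (Fin p) ℝ)
    (h0 : S0.PosDef) (h1 : S1.PosDef)
    (μh0 μh1 : ℕ → EuclideanSpace ℝ (Fin p)) (Sh0 Sh1 : ℕ → Matrix (Fin p) (Fin p) ℝ)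
    (hpd0 : ∀ n, (Sh0 n).PosDef) (hpd1 : ∀ n, (Sh1 n).PosDef)
    (hμ0 : Tendsto μh0 atTop (nhds μ0)) (hμ1 : Tendsto μh1 atTop (nhds μ1))
    (hS0 : Tendsto (fun n => frobNorm (Sh0 n - S0)) atTop (nhds 0))
    (hS1 : Tendsto (fun n => frobNorm (Sh1 n - S1)) atTop (nhds 0))
    (α0 : EuclideanSpace ℝ (Fin p)) (hα0 : ‖α0‖ = 1)
    (hα0min : ∀ α : EuclideanSpace ℝ (Fin p), ‖α‖ = 1 →
        Evec μ0 μ1 S0 S1 α0 ≤ Evec μ0 μ1 S0 S1 α)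
    (hα0uniq : ∀ α : EuclideanSpace ℝ (Fin p), ‖α‖ = 1 →
        Evec μ0 μ1 S0 S1 α = Evec μ0 μ1 S0 S1 α0 → α = α0 ∨ α = -α0)
    (αh : ℕ → EuclideanSpace ℝ (Fin p)) (hαh : ∀ n, ‖αh n‖ = 1)
    (hαhmin : ∀ n, ∀ α : EuclideanSpace ℝ (Fin p), ‖α‖ = 1 →
        Evec (μh0 n) (μh1 n) (Sh0 n) (Sh1 n) (αh n) ≤
          Evec (μh0 n) (μh1 n) (Sh0 n) (Sh1 n) α) :
    Tendsto (fun n => min ‖αh n - α0‖ ‖αh n + α0‖) atTop (nhds 0) := by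
  have hconv := Evec_argmin_consistency_general h0 h1 hμ0 hμ1
    (tendsto_of_tendsto_frobNorm_sub hS0) (tendsto_of_tendsto_frobNorm_sub hS1) hαh hαhmin
  exact (tendsto_min_norm_sub_norm_add α0).comp <| hconv.mono_right <| nhdsSet_mono
    fun α hα => hα0uniq α hα.1 (le_antisymm (hα.2 α0 hα0) (hα0min α hα.1))
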